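/- Let ν > 0 and let X be a centered integrable real random variable with X > −ν almost surely, such that there is a measurable τ : ℝ → ℝ with τ(X) integrable and E[X φ(X)] = E[φ′(X) τ(X)] for every bounded function φ that is continuously differentiable with bounded derivative on (−ν, ∞). Let Γ_ν := 2G − ν where G has the Gamma distribution with shape ν/2 and rate 1. Then d_𝓗(X, Γ_ν) ≤ E[|2(X + ν) − τ(X)|]. -/

import Mathlib

open MeasureTheory ProbabilityTheory

/-- The distance `d_𝓗` between two laws on `ℝ`, as a supremum over `C²` test
functions `h` with `max(‖h‖_∞, ‖h'‖_∞, ‖h''‖_∞) ≤ 1`. -/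
noncomputable def dH (μ ν : Measure ℝ) : ℝ :=
  ⨆ h : {f : ℝ → ℝ // ContDiff ℝ 2 f ∧ (∀ x, |f x| ≤ 1) ∧ (∀ x, |deriv f x| ≤ 1) ∧
      ∀ x, |deriv (deriv f) x| ≤ 1},
    |(∫ x, h.1 x ∂μ) - ∫ x, h.1 x ∂ν|

/-- The law of `Γ_ν := 2 G - ν`, where `G` is Gamma-distributed with shape `ν/2`
and rate `1`. -/
noncomputable def gammaNuLaw (ν : ℝ) : Measure ℝ :=
  Measure.map (fun x => 2 * x - ν) (gammaMeasure (ν / 2) 1)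

lemma sg_localmax {z z1 : ℝ → ℝ} {x z2 : ℝ} (hm : IsLocalMax z x)
    (h1 : ∀ᶠ y in nhds x, HasDerivAt z (z1 y) y) (h2 : HasDerivAt z1 z2 x) : z2 ≤ 0 := by
  by_contra hpos
  push Not at hpos
  have e1 : deriv z =ᶠ[nhds x] z1 := h1.mono fun y hy => hy.deriv
  have hz1 : deriv z x = 0 := hm.deriv_eq_zero
  have e2 : deriv (deriv z) x = z2 := by rw [e1.deriv_eq]; exact h2.deriv
  have hmin : IsLocalMin z x := isLocalMin_of_deriv_deriv_pos (by rw [e2]; exact hpos) hz1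
    h1.self_of_nhds.continuousAt
  have hc : z =ᶠ[nhds x] fun _ => z x := by
    filter_upwards [hm, hmin] with y h h' using le_antisymm h h'
  have e3 : deriv (deriv z) x = 0 := by
    rw [hc.deriv.deriv_eq]; simp
  linarith

lemma sg_max {a : ℝ} (ha : 0 < a) {w w1 w2 : ℝ → ℝ} {C : ℝ}
    (h1 : ∀ y, 0 < y → HasDerivAt w (w1 y) y) (h2 : ∀ y, 0 < y → HasDerivAt w1 (w2 y) y)
    (hL : ∀ y, 0 < y → -2 ≤ y * w2 y + (a + 2 - y) * w1 y - 2 * w y)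
    (hC : ∀ y, 0 < y → w y ≤ C * (1 + 1 / y)) {y : ℝ} (hy : 0 < y) : w y ≤ 1 := by
  obtain ⟨s, hs1, hs2, hsa⟩ : ∃ s : ℝ, 1 < s ∧ s ≤ 2 ∧ s ≤ 1 + a := by
    refine ⟨1 + min a 1, ?_, ?_, ?_⟩
    · have := lt_min ha one_pos; linarith
    · have := min_le_right a 1; linarith
    · have := min_le_left a 1; linarith
  wlog hC0 : 0 < C generalizing C
  · refine this (C := 1) (fun y hy => (hC y hy).trans ?_) one_pos
    have : 0 < 1 + 1 / y := by positivity
    nlinarith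
  set V : ℝ → ℝ := fun y => y ^ (-s) + y + (a + 2) / 2 with hV
  have key : ∀ ε > 0, ∀ y, 0 < y → w y ≤ 1 + ε * V y := by
    intro ε hε y0 hy0
    by_contra hcon
    push Not at hcon
    set z : ℝ → ℝ := fun y => w y - 1 - ε * V y with hz
    set z1 : ℝ → ℝ := fun y => w1 y - ε * ((-s) * y ^ (-s - 1) + 1) with hz1
    set z2 : ℝ → ℝ := fun y => w2 y - ε * ((-s) * ((-s - 1) * y ^ (-s - 1 - 1))) with hz2
    have d1 : ∀ y, 0 < y → HasDerivAt z (z1 y) y := by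
      intro y hy
      have := ((Real.hasDerivAt_rpow_const (x := y) (p := -s) (Or.inl hy.ne')).add
        (hasDerivAt_id y)).add_const ((a + 2) / 2)
      exact ((h1 y hy).sub_const 1).sub (this.const_mul ε)
    have d2 : ∀ y, 0 < y → HasDerivAt z1 (z2 y) y := by
      intro y hy
      have := (((Real.hasDerivAt_rpow_const (x := y) (p := -s - 1) (Or.inl hy.ne')).const_mul
        (-s)).add_const 1).const_mul ε
      exact (h2 y hy).sub this
    have hz0 : 0 < z y0 := by simp only [hz]; linarith
    -- near zero
    have t0 : Filter.Tendsto (fun y : ℝ => y ^ (s - 1)) (nhds 0) (nhds 0) := by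
      have := (Real.continuousAt_rpow_const 0 (s - 1) (Or.inr (by linarith))).tendsto
      rwa [Real.zero_rpow (by linarith)] at this
    have t1 : ∀ᶠ y : ℝ in nhds 0, y ^ (s - 1) < ε / (2 * C) :=
      t0.eventually (gt_mem_nhds (by positivity))
    obtain ⟨δ, hδ, hδ'⟩ := Metric.eventually_nhds_iff.1 t1
    have n0 : ∀ y, 0 < y → y < δ → y ≤ 1 → z y < 0 := by
      intro y hy hyd hy1
      have h := hδ' (y := y) (by simpa [abs_of_pos hy] using hyd)
      have hs' : y ^ (s - 1) * y ^ (-s) = 1 / y := by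
        rw [← Real.rpow_add hy, show s - 1 + -s = (-1 : ℝ) by ring, Real.rpow_neg_one, one_div]
      have hp : 0 < y ^ (-s) := Real.rpow_pos_of_pos hy _
      have h3 : 1 / y < ε / (2 * C) * y ^ (-s) := by
        rw [← hs']; exact mul_lt_mul_of_pos_right h hp
      have h4 : 2 * C * (1 / y) < ε * y ^ (-s) := by
        have := mul_lt_mul_of_pos_left h3 (show 0 < 2 * C by positivity)
        refine this.trans_eq ?_
        field_simp
      have h5 : 1 ≤ 1 / y := by rw [le_div_iff₀ hy]; linarith
      have h6 := hC y hy
      have h7 : 0 < ε * (y + (a + 2) / 2) := by positivity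
      simp only [hz, hV]
      nlinarith
    have n1 : ∀ y, 1 ≤ y → 2 * C / ε < y → z y < 0 := by
      intro y hy1 hyd
      have hy : 0 < y := by linarith
      have hp : 0 < y ^ (-s) := Real.rpow_pos_of_pos hy _
      have h5 : 1 / y ≤ 1 := by rw [div_le_iff₀ hy]; linarith
      have h6 := hC y hy
      rw [div_lt_iff₀ hε] at hyd
      have h7 : 0 < ε * (y ^ (-s) + (a + 2) / 2) := by positivity
      simp only [hz, hV]
      nlinarith
    set α := min (δ / 2) 1 with hα
    set β := max (2 * C / ε + 1) 1 with hβ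
    have hα0 : 0 < α := lt_min (by linarith) one_pos
    have hαs : ∀ y, 0 < y → y ≤ α → z y < 0 := fun y h h' =>
      n0 y h (by have := h'.trans (min_le_left _ _); linarith) (h'.trans (min_le_right _ _))
    have hβs : ∀ y, β ≤ y → z y < 0 := fun y h =>
      n1 y ((le_max_right _ _).trans h) (by have := (le_max_left _ _).trans h; linarith)
    have hαy : α < y0 := by
      by_contra h; push Not at h; have := hαs y0 hy0 h; linarith
    have hβy : y0 < β := by
      by_contra h; push Not at h; have := hβs y0 h; linarith
    have hcont : ContinuousOn z (Set.Icc α β) := fun y hy =>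
      (d1 y (hα0.trans_le hy.1)).continuousAt.continuousWithinAt
    obtain ⟨x, hx, hxm⟩ := isCompact_Icc.exists_isMaxOn ⟨y0, hαy.le, hβy.le⟩ hcont
    have hzx : 0 < z x := hz0.trans_le (hxm ⟨hαy.le, hβy.le⟩)
    have hx0 : 0 < x := hα0.trans_le hx.1
    have hxα : α < x := by
      by_contra h; push Not at h; have := hαs x hx0 h; linarith
    have hxβ : x < β := by
      by_contra h; push Not at h; have := hβs x h; linarith
    have hloc : IsLocalMax z x := hxm.isLocalMax (Icc_mem_nhds hxα hxβ)
    have e2 := sg_localmax hloc ((lt_mem_nhds hx0).mono d1) (d2 x hx0)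
    have e1 : z1 x = 0 := hloc.hasDerivAt_eq_zero (d1 x hx0)
    have hl := hL x hx0
    have r1 : x * x ^ (-s - 1) = x ^ (-s) := by
      rw [← Real.rpow_one_add' hx0.le (by linarith)]; congr 1; ring
    have r2 : x * x ^ (-s - 1 - 1) = x ^ (-s - 1) := by
      rw [← Real.rpow_one_add' hx0.le (by linarith)]; congr 1; ring
    have p1 : 0 < x ^ (-s - 1) := Real.rpow_pos_of_pos hx0 _
    have p0 : 0 < x ^ (-s) := Real.rpow_pos_of_pos hx0 _
    have e3 : x * z2 x ≤ 0 := mul_nonpos_of_nonneg_of_nonpos hx0.le e2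
    have q1 : w1 x = ε * ((-s) * x ^ (-s - 1) + 1) := by simp only [hz1] at e1; linarith
    have q2 : x * w2 x ≤ ε * (s * (s + 1) * x ^ (-s - 1)) := by
      have : x * z2 x = x * w2 x - ε * (s * (s + 1) * (x * x ^ (-s - 1 - 1))) := by
        simp only [hz2]; ring
      rw [r2] at this
      linarith
    have q3 : 1 + ε * (x ^ (-s) + x + (a + 2) / 2) < w x := by
      simp only [hz, hV] at hzx; linarith
    have q5 : (a + 2 - x) * w1 x
        = ε * (-(s * (a + 2)) * x ^ (-s - 1) + s * x ^ (-s) + (a + 2 - x)) := by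
      rw [q1, ← r1]; ring
    have q6 : 0 < ε * (s * (1 + a - s) * x ^ (-s - 1) + (2 - s) * x ^ (-s) + 3 * x) := by
      have : 0 ≤ s * (1 + a - s) * x ^ (-s - 1) :=
        mul_nonneg (mul_nonneg (by linarith) (by linarith)) p1.le
      have : 0 ≤ (2 - s) * x ^ (-s) := mul_nonneg (by linarith) p0.le
      apply mul_pos hε; linarith
    rw [q5] at hl
    nlinarith
  have hlim : Filter.Tendsto (fun ε : ℝ => 1 + ε * V y) (nhdsWithin 0 (Set.Ioi 0)) (nhds 1) := by
    have : Continuous fun ε : ℝ => 1 + ε * V y := by fun_prop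
    have := this.tendsto 0
    simp only [zero_mul, add_zero] at this
    exact this.mono_left nhdsWithin_le_nhds
  exact ge_of_tendsto hlim (eventually_nhdsWithin_of_forall fun ε hε => key ε hε y hy)

lemma sg_bdd {a M : ℝ} (ha : 0 < a) (hM : 0 ≤ M) {F kt : ℝ → ℝ} (hk : ∀ y, |kt y| ≤ M)
    (hF0 : F 0 = 0) (hFc : Continuous F)
    (hF : ∀ y, 0 < y → HasDerivAt F (kt y * (Real.exp (-y) * y ^ (a - 1))) y)
    (hlim : Filter.Tendsto F Filter.atTop (nhds 0)) :
    ∃ C, ∀ y, 0 < y → F y ≤ C * (Real.exp (-y) * y ^ a) := by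
  have hD : ∀ C y, 0 < y → HasDerivAt (fun y => F y - C * (Real.exp (-y) * y ^ a))
      ((kt y - C * (a - y)) * (Real.exp (-y) * y ^ (a - 1))) y := by
    intro C y hy
    have e : HasDerivAt (fun y : ℝ => Real.exp (-y)) (-Real.exp (-y)) y := by
      simpa using (hasDerivAt_neg y).exp
    have := (hF y hy).sub ((e.mul
      (Real.hasDerivAt_rpow_const (x := y) (p := a) (Or.inl hy.ne'))).const_mul C)
    refine this.congr_deriv ?_
    have : y ^ a = y * y ^ (a - 1) := by
      rw [← Real.rpow_one_add' hy.le (by linarith)]; congr 1; ring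
    rw [this]; ring
  have hc : ∀ C, Continuous (fun y => F y - C * (Real.exp (-y) * y ^ a)) := by
    intro C
    have := Real.continuous_rpow_const ha.le
    fun_prop
  -- near zero
  have c1 : ∀ y, 0 < y → y ≤ a / 2 → F y ≤ (2 * M / a) * (Real.exp (-y) * y ^ a) := by
    intro y hy hya
    have anti : AntitoneOn (fun y => F y - (2 * M / a) * (Real.exp (-y) * y ^ a))
        (Set.Icc 0 (a / 2)) := by
      refine antitoneOn_of_deriv_nonpos (convex_Icc _ _) (hc _).continuousOn ?_ ?_
      · intro x hx
        rw [interior_Icc] at hx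
        exact (hD _ x hx.1).differentiableAt.differentiableWithinAt
      · intro x hx
        rw [interior_Icc] at hx
        rw [(hD _ x hx.1).deriv]
        refine mul_nonpos_of_nonpos_of_nonneg ?_
          (mul_nonneg (Real.exp_pos _).le (Real.rpow_nonneg hx.1.le _))
        have h1 := (abs_le.1 (hk x)).2
        have : M ≤ 2 * M / a * (a - x) := by
          rw [div_mul_eq_mul_div, le_div_iff₀ ha]; nlinarith [hx.2]
        linarith
    have := anti (Set.left_mem_Icc.2 (by linarith)) ⟨hy.le, hya⟩ hy.le
    simp only [hF0, Real.zero_rpow ha.ne'] at this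
    linarith
  have c2 : ∀ y, a + 1 ≤ y → F y ≤ M * (Real.exp (-y) * y ^ a) := by
    intro y hy
    have mono : MonotoneOn (fun y => F y - M * (Real.exp (-y) * y ^ a)) (Set.Ici (a + 1)) := by
      refine monotoneOn_of_deriv_nonneg (convex_Ici _) (hc _).continuousOn ?_ ?_
      · intro x hx
        rw [interior_Ici] at hx
        exact (hD _ x (by linarith [hx.out])).differentiableAt.differentiableWithinAt
      · intro x hx
        rw [interior_Ici] at hx
        have hx' : a + 1 < x := hx
        rw [(hD _ x (by linarith)).deriv]
        refine mul_nonneg ?_ (mul_nonneg (Real.exp_pos _).le (Real.rpow_nonneg (by linarith) _))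
        have h1 := (abs_le.1 (hk x)).1
        nlinarith
    have hl : Filter.Tendsto (fun y => F y - M * (Real.exp (-y) * y ^ a)) Filter.atTop
        (nhds (0 - M * 0)) := by
      refine hlim.sub (Filter.Tendsto.const_mul M ?_)
      have := tendsto_rpow_mul_exp_neg_mul_atTop_nhds_zero a 1 one_pos
      refine this.congr fun x => ?_
      rw [mul_comm]; simp
    rw [mul_zero, sub_zero] at hl
    have : F y - M * (Real.exp (-y) * y ^ a) ≤ 0 := by
      refine ge_of_tendsto hl ?_
      filter_upwards [Filter.eventually_ge_atTop y] with x hx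
      exact mono hy (hy.trans hx) hx
    linarith
  obtain ⟨C3, h3⟩ : ∃ C, ∀ y ∈ Set.Icc (a / 2) (a + 1), F y / (Real.exp (-y) * y ^ a) ≤ C := by
    have : ContinuousOn (fun y => F y / (Real.exp (-y) * y ^ a)) (Set.Icc (a / 2) (a + 1)) := by
      have := Real.continuous_rpow_const ha.le
      refine ContinuousOn.div hFc.continuousOn (by fun_prop) fun x hx => ?_
      have : 0 < x := by linarith [hx.1]
      positivity
    obtain ⟨C, hC⟩ := isCompact_Icc.bddAbove_image this
    exact ⟨C, fun y hy => hC ⟨y, hy, rfl⟩⟩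
  refine ⟨max (max (2 * M / a) M) C3, fun y hy => ?_⟩
  have hp : 0 < Real.exp (-y) * y ^ a := by positivity
  rcases le_total y (a / 2) with h | h
  · exact (c1 y hy h).trans (by gcongr; simp)
  rcases le_total (a + 1) y with h' | h'
  · exact (c2 y h').trans (by gcongr; simp)
  · have := h3 y ⟨h, h'⟩
    rw [div_le_iff₀ hp] at this
    exact this.trans (by gcongr; simp)

lemma sg_solve {a : ℝ} (ha : 0 < a) {k k1 k2 : ℝ → ℝ} {M m : ℝ}
    (hk1 : ∀ y, HasDerivAt k (k1 y) y) (hk2 : ∀ y, HasDerivAt k1 (k2 y) y)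
    (hM : ∀ y, |k y - m| ≤ M) (hb : ∀ y, |k2 y| ≤ 2)
    (hzero : ∫ t in Set.Ioi (0:ℝ), (k t - m) * (Real.exp (-t) * t ^ (a - 1)) = 0) :
    ∃ g w : ℝ → ℝ, ∃ C, (∀ y, 0 < y → HasDerivAt g (w y) y) ∧
      (∀ y, 0 < y → y * w y + (a - y) * g y = k y - m) ∧
      (∀ y, 0 < y → |g y| ≤ C) ∧ (∀ y, 0 < y → |w y| ≤ 1) ∧ ContinuousOn w (Set.Ioi 0) := by
  have hM0 : 0 ≤ M := (abs_nonneg _).trans (hM 0)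
  have hkc : Continuous k := continuous_iff_continuousAt.2 fun y => (hk1 y).continuousAt
  set p : ℝ → ℝ := fun t => Real.exp (-t) * t ^ (a - 1) with hp
  have hpint : IntegrableOn p (Set.Ioi 0) := Real.GammaIntegral_convergent ha
  have hqint : IntegrableOn (fun t => (k t - m) * p t) (Set.Ioi 0) := by
    refine Integrable.bdd_mul (c := M) hpint (by fun_prop) ?_
    exact Filter.Eventually.of_forall fun t => by simpa using hM t
  set q : ℝ → ℝ := (Set.Ioi (0:ℝ)).indicator (fun t => (k t - m) * p t) with hq
  have hqi : Integrable q := hqint.integrable_indicator measurableSet_Ioi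
  set F : ℝ → ℝ := fun y => ∫ t in (0:ℝ)..y, q t with hFdef
  have hF0 : F 0 = 0 := by simp [hFdef]
  have hFc : Continuous F := intervalIntegral.continuous_primitive
    (fun _ _ => hqi.intervalIntegrable) 0
  have hpc : ∀ y, 0 < y → ContinuousAt p y := fun y hy => by
    have := Real.continuousAt_rpow_const y (a - 1) (Or.inl hy.ne')
    simp only [hp]; fun_prop
  have hFd : ∀ y, 0 < y → HasDerivAt F ((k y - m) * p y) y := by
    intro y hy
    have hqy : q y = (k y - m) * p y := by simp [hq, hy]
    rw [← hqy]
    refine intervalIntegral.integral_hasDerivAt_right hqi.intervalIntegrable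
      hqi.aestronglyMeasurable.stronglyMeasurableAtFilter ?_
    have : ContinuousAt (fun t => (k t - m) * p t) y :=
      (hkc.continuousAt.sub continuousAt_const).mul (hpc y hy)
    refine this.congr ?_
    filter_upwards [lt_mem_nhds hy] with t ht
    simp [hq, ht]
  have hFl : Filter.Tendsto F Filter.atTop (nhds 0) := by
    have := intervalIntegral_tendsto_integral_Ioi (0:ℝ) hqi.integrableOn Filter.tendsto_id
    rwa [setIntegral_congr_fun (g := fun t => (k t - m) * p t) measurableSet_Ioi
      (fun t ht => by simp [hq, ht.out]), hzero] at this
  obtain ⟨C1, hC1⟩ := sg_bdd ha hM0 (kt := fun y => k y - m) hM hF0 hFc hFd hFl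
  obtain ⟨C2, hC2⟩ := sg_bdd ha hM0 (kt := fun y => -(k y - m)) (F := fun y => - F y)
    (fun y => by simpa only [abs_neg] using hM y) (by simp [hF0]) hFc.neg
    (fun y hy => (hFd y hy).neg.congr_deriv (by simp only [hp]; ring)) (by simpa using hFl.neg)
  have hE : ∀ y, 0 < y → Real.exp (-y) * y ^ a = y * p y := by
    intro y hy
    have : y ^ a = y * y ^ (a - 1) := by
      rw [← Real.rpow_one_add' hy.le (by linarith)]; congr 1; ring
    rw [this]; simp only [hp]; ring
  have hpp : ∀ y, 0 < y → 0 < p y := fun y hy => by simp only [hp]; positivity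
  set g : ℝ → ℝ := fun y => F y / (Real.exp (-y) * y ^ a) with hg
  set w : ℝ → ℝ := fun y => ((k y - m) - (a - y) * g y) / y with hw
  have hgd : ∀ y, 0 < y → HasDerivAt g (w y) y := by
    intro y hy
    have e : HasDerivAt (fun y : ℝ => Real.exp (-y)) (-Real.exp (-y)) y := by
      simpa using (hasDerivAt_neg y).exp
    have hd : HasDerivAt (fun y => Real.exp (-y) * y ^ a) ((a - y) * p y) y := by
      refine (e.mul (Real.hasDerivAt_rpow_const (x := y) (p := a) (Or.inl hy.ne'))).congr_deriv ?_
      have := hE y hy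
      simp only [hp] at this ⊢
      linear_combination -this
    have hne := hpp y hy
    refine ((hFd y hy).div hd (by positivity)).congr_deriv ?_
    simp only [hw, hg, hE y hy]
    field_simp
  have hgb : ∀ y, 0 < y → |g y| ≤ max C1 C2 := by
    intro y hy
    have hpos : 0 < Real.exp (-y) * y ^ a := by positivity
    simp only [hg]
    rw [abs_div, abs_of_pos hpos, div_le_iff₀ hpos, abs_le']
    exact ⟨(hC1 y hy).trans (by gcongr; simp), (hC2 y hy).trans (by gcongr; simp)⟩
  set C := max C1 C2 with hCdef
  have hC0 : 0 ≤ C := (abs_nonneg _).trans (hgb 1 one_pos)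
  set w1 : ℝ → ℝ := fun y => (k1 y + g y - (a + 1 - y) * w y) / y with hw1
  set w2 : ℝ → ℝ := fun y => (k2 y + 2 * w y - (a + 2 - y) * w1 y) / y with hw2
  have hwd : ∀ y, 0 < y → HasDerivAt w (w1 y) y := by
    intro y hy
    have := (((hk1 y).sub_const m).sub (((hasDerivAt_id y).const_sub a).mul (hgd y hy))).div
      (hasDerivAt_id y) hy.ne'
    refine this.congr_deriv ?_
    simp only [hw1, hw, id]
    simp
    field_simp
    ring
  have hw1d : ∀ y, 0 < y → HasDerivAt w1 (w2 y) y := by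
    intro y hy
    have := (((hk2 y).add (hgd y hy)).sub
      (((hasDerivAt_id y).const_sub (a + 1)).mul (hwd y hy))).div (hasDerivAt_id y) hy.ne'
    refine this.congr_deriv ?_
    have e1 : y * w1 y = k1 y + g y - (a + 1 - y) * w y := by
      simp only [hw1]; field_simp
    simp only [hw2, id, Pi.add_apply, Pi.sub_apply, Pi.mul_apply]
    rw [← e1]
    clear_value w1 w g
    field_simp
    ring
  have hL : ∀ y, 0 < y → y * w2 y + (a + 2 - y) * w1 y - 2 * w y = k2 y := by
    intro y hy
    simp only [hw2]
    rw [mul_div_cancel₀ _ hy.ne']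
    ring
  have hwb : ∀ y, 0 < y → |w y| ≤ (M + (a + 1) * C) * (1 + 1 / y) := by
    intro y hy
    simp only [hw]
    rw [abs_div, abs_of_pos hy, div_le_iff₀ hy]
    have h1 : |k y - m - (a - y) * g y| ≤ M + (a + y) * C := by
      refine (abs_sub _ _).trans (add_le_add (hM y) ?_)
      rw [abs_mul]
      refine mul_le_mul ?_ (hgb y hy) (abs_nonneg _) (by linarith)
      rw [abs_le]; constructor <;> linarith
    refine h1.trans ?_
    have : (M + (a + 1) * C) * (1 + 1 / y) * y = (M + (a + 1) * C) * (y + 1) := by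
      field_simp
    rw [this]
    nlinarith [mul_nonneg hM0 hy.le, mul_nonneg ha.le (mul_nonneg hC0 hy.le)]
  refine ⟨g, w, C, hgd, ?_, hgb, ?_, ?_⟩
  · intro y hy
    simp only [hw]
    rw [mul_div_cancel₀ _ hy.ne']
    ring
  · intro y hy
    rw [abs_le']
    constructor
    · refine sg_max ha hwd hw1d (fun y hy => ?_) (fun y hy => (le_abs_self _).trans (hwb y hy)) hy
      rw [hL y hy]; exact (abs_le.1 (hb y)).1
    · refine sg_max (w := fun y => - w y) (w1 := fun y => - w1 y) (w2 := fun y => - w2 y) ha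
        (fun y hy => (hwd y hy).neg) (fun y hy => (hw1d y hy).neg) (fun y hy => ?_)
        (fun y hy => (neg_le_abs _).trans (hwb y hy)) hy
      have := hL y hy
      have := (abs_le.1 (hb y)).2
      linarith
  · exact fun y hy => (hwd y hy).continuousAt.continuousWithinAt

lemma sg_gamma {a : ℝ} (ha : 0 < a) (K : ℝ → ℝ) :
    ∫ y, K y ∂(gammaMeasure a 1) =
      (1 / Real.Gamma a) * ∫ t in Set.Ioi (0:ℝ), K t * (Real.exp (-t) * t ^ (a - 1)) := by
  rw [gammaMeasure]
  unfold gammaPDF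
  rw [integral_withDensity_eq_integral_toReal_smul]
  · rw [← integral_const_mul, ← integral_indicator measurableSet_Ioi]
    refine integral_congr_ae ?_
    filter_upwards [compl_mem_ae_iff.2 (measure_singleton (0:ℝ))] with x hx
    have hx' : x ≠ 0 := hx
    rw [ENNReal.toReal_ofReal (gammaPDFReal_nonneg ha one_pos x)]
    by_cases h : 0 < x
    · simp [gammaPDFReal, h, h.le]; ring
    · have : ¬ 0 ≤ x := fun h' => h (lt_of_le_of_ne h' hx'.symm)
      simp [gammaPDFReal, h, this]
  · exact (measurable_gammaPDFReal a 1).ennreal_ofReal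
  · simp

theorem stein_gamma_bound
    {Ω : Type*} [MeasureSpace Ω] [IsProbabilityMeasure (ℙ : Measure Ω)]
    (ν : ℝ) (hν : 0 < ν)
    (X : Ω → ℝ) (τ : ℝ → ℝ) (hXm : Measurable X) (hτm : Measurable τ)
    (hXint : Integrable X) (hXcentered : ∫ ω, X ω = 0)
    (hsupp : ∀ᵐ ω, -ν < X ω)
    (hτint : Integrable (fun ω => τ (X ω)))
    (hkernel : ∀ φ φ' : ℝ → ℝ, (∃ C, ∀ x, |φ x| ≤ C) →
      (∀ x ∈ Set.Ioi (-ν), HasDerivAt φ (φ' x) x) →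
      ContinuousOn φ' (Set.Ioi (-ν)) →
      (∃ C, ∀ x ∈ Set.Ioi (-ν), |φ' x| ≤ C) →
      ∫ ω, X ω * φ (X ω) = ∫ ω, φ' (X ω) * τ (X ω)) :
    dH (Measure.map X ℙ) (gammaNuLaw ν) ≤ ∫ ω, |2 * (X ω + ν) - τ (X ω)| := by
  have ha : 0 < ν / 2 := by linarith
  refine Real.iSup_le ?_ (integral_nonneg fun _ => abs_nonneg _)
  rintro ⟨h, hC2, hb0, -, hb2⟩
  have hhc : Continuous h := hC2.continuous
  have hd1 : ∀ x, HasDerivAt h (deriv h x) x := fun x =>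
    (hC2.differentiable (by norm_num) x).hasDerivAt
  have hd2 : ∀ x, HasDerivAt (deriv h) (deriv (deriv h) x) x := fun x => by
    have : ContDiff ℝ 1 (deriv h) := by
      have h2 : ContDiff ℝ (1 + 1) h := by norm_num; exact hC2
      exact (contDiff_succ_iff_deriv.1 h2).2.2
    exact (this.differentiable (by norm_num) x).hasDerivAt
  set m : ℝ := ∫ x, h x ∂(gammaNuLaw ν) with hm
  have haff : ∀ y : ℝ, HasDerivAt (fun y => 2 * y - ν) 2 y := fun y => by
    simpa using ((hasDerivAt_id y).const_mul 2).sub_const ν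
  have hmK : m = ∫ y, h (2 * y - ν) ∂(gammaMeasure (ν / 2) 1) := by
    rw [hm, gammaNuLaw, integral_map (by fun_prop) hhc.aestronglyMeasurable]
  have hpint : IntegrableOn (fun t : ℝ => Real.exp (-t) * t ^ (ν / 2 - 1)) (Set.Ioi 0) :=
    Real.GammaIntegral_convergent ha
  have hzero : ∫ t in Set.Ioi (0:ℝ), (h (2 * t - ν) / 2 - m / 2) *
      (Real.exp (-t) * t ^ (ν / 2 - 1)) = 0 := by
    have hi : IntegrableOn (fun t => h (2 * t - ν) * (Real.exp (-t) * t ^ (ν / 2 - 1)))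
        (Set.Ioi 0) := by
      refine Integrable.bdd_mul (c := 1) hpint
        (by fun_prop : Continuous fun t => h (2 * t - ν)).aestronglyMeasurable ?_
      exact Filter.Eventually.of_forall fun t => by simpa using hb0 _
    have hG : ∫ t in Set.Ioi (0:ℝ), Real.exp (-t) * t ^ (ν / 2 - 1) = Real.Gamma (ν / 2) :=
      (Real.Gamma_eq_integral ha).symm
    have hGpos := Real.Gamma_pos_of_pos ha
    have e := sg_gamma ha (fun y => h (2 * y - ν))
    rw [← hmK] at e
    have : ∀ t : ℝ, (h (2 * t - ν) / 2 - m / 2) * (Real.exp (-t) * t ^ (ν / 2 - 1)) =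
        (1 / 2) * (h (2 * t - ν) * (Real.exp (-t) * t ^ (ν / 2 - 1))
          - m * (Real.exp (-t) * t ^ (ν / 2 - 1))) := fun t => by ring
    simp_rw [this]
    rw [integral_const_mul, integral_sub hi (hpint.const_mul m), integral_const_mul, hG, e]
    field_simp
    ring
  obtain ⟨g, w, C, hgd, heq, hgb, hwb, hwc⟩ := sg_solve ha
    (k := fun y => h (2 * y - ν) / 2) (k1 := fun y => deriv h (2 * y - ν))
    (k2 := fun y => deriv (deriv h) (2 * y - ν) * 2) (M := 1 / 2 + |m / 2|) (m := m / 2)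
    (fun y => (((hd1 _).comp y (haff y)).div_const 2).congr_deriv (by ring))
    (fun y => (hd2 _).comp y (haff y))
    (fun y => by
      refine (abs_sub _ _).trans ?_
      have := hb0 (2 * y - ν)
      rw [abs_div, abs_two]; linarith)
    (fun y => by
      have := hb2 (2 * y - ν)
      rw [abs_mul, abs_two]; linarith)
    hzero
  set φ : ℝ → ℝ := (Set.Ioi (-ν)).indicator (fun x => g ((x + ν) / 2)) with hφ
  set φ' : ℝ → ℝ := (Set.Ioi (-ν)).indicator (fun x => w ((x + ν) / 2) / 2) with hφ'
  have hpos : ∀ x ∈ Set.Ioi (-ν), 0 < (x + ν) / 2 := fun x hx => by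
    have : -ν < x := hx
    linarith
  have haff2 : ∀ x : ℝ, HasDerivAt (fun x => (x + ν) / 2) (1 / 2) x := fun x => by
    simpa using ((hasDerivAt_id x).add_const ν).div_const 2
  have hgd' : ∀ x ∈ Set.Ioi (-ν),
      HasDerivAt (fun x => g ((x + ν) / 2)) (w ((x + ν) / 2) / 2) x := fun x hx =>
    ((hgd _ (hpos x hx)).comp x (haff2 x)).congr_deriv (by ring)
  have hwc' : ContinuousOn (fun x => w ((x + ν) / 2) / 2) (Set.Ioi (-ν)) :=
    (hwc.comp (f := fun x => (x + ν) / 2) (by fun_prop) hpos).div_const 2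
  have hgc' : ContinuousOn (fun x => g ((x + ν) / 2)) (Set.Ioi (-ν)) := fun x hx =>
    (hgd' x hx).continuousAt.continuousWithinAt
  have hC0 : 0 ≤ C := (abs_nonneg _).trans (hgb 1 one_pos)
  have hφb : ∀ x, |φ x| ≤ C := by
    intro x
    by_cases hx : x ∈ Set.Ioi (-ν)
    · rw [hφ, Set.indicator_of_mem hx]; exact hgb _ (hpos x hx)
    · rw [hφ, Set.indicator_of_notMem hx]; simpa using hC0
  have hφb' : ∀ x, |φ' x| ≤ 1 := by
    intro x
    by_cases hx : x ∈ Set.Ioi (-ν)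
    · rw [hφ', Set.indicator_of_mem hx, abs_div, abs_two]
      have := hwb _ (hpos x hx)
      linarith
    · rw [hφ', Set.indicator_of_notMem hx]; simp
  have hφm : Measurable φ := by
    rw [hφ, ← Set.piecewise_eq_indicator]
    exact hgc'.measurable_piecewise continuousOn_const measurableSet_Ioi
  have hφm' : Measurable φ' := by
    rw [hφ', ← Set.piecewise_eq_indicator]
    exact hwc'.measurable_piecewise continuousOn_const measurableSet_Ioi
  have hker := hkernel φ φ' ⟨C, hφb⟩
    (fun x hx => by
      have : φ' x = w ((x + ν) / 2) / 2 := by rw [hφ', Set.indicator_of_mem hx]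
      rw [this]
      refine (hgd' x hx).congr_of_eventuallyEq ?_
      filter_upwards [Ioi_mem_nhds hx] with t ht
      rw [hφ, Set.indicator_of_mem ht])
    (hwc'.congr fun x hx => by rw [hφ', Set.indicator_of_mem hx])
    ⟨1, fun x _ => hφb' x⟩
  have hst : ∀ x ∈ Set.Ioi (-ν), h x - m = 2 * (x + ν) * φ' x - x * φ x := by
    intro x hx
    have := heq _ (hpos x hx)
    rw [show 2 * ((x + ν) / 2) - ν = x by ring] at this
    rw [hφ, hφ', Set.indicator_of_mem hx, Set.indicator_of_mem hx]
    linear_combination -2 * this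
  have i1 : Integrable (fun ω => X ω * φ (X ω)) :=
    hXint.mul_bdd (c := C) (hφm.comp hXm).aestronglyMeasurable
      (Filter.Eventually.of_forall fun ω => by simpa using hφb _)
  have i2 : Integrable (fun ω => φ' (X ω) * τ (X ω)) :=
    hτint.bdd_mul (c := 1) (hφm'.comp hXm).aestronglyMeasurable
      (Filter.Eventually.of_forall fun ω => by simpa using hφb' _)
  have i30 : Integrable (fun ω => 2 * (X ω + ν)) := (hXint.add (integrable_const ν)).const_mul 2
  have i3 : Integrable (fun ω => 2 * (X ω + ν) * φ' (X ω)) :=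
    i30.mul_bdd (c := 1) (hφm'.comp hXm).aestronglyMeasurable
      (Filter.Eventually.of_forall fun ω => by simpa using hφb' _)
  have i4 : Integrable (fun ω => h (X ω)) :=
    (integrable_const (1:ℝ)).mono' (hhc.measurable.comp hXm).aestronglyMeasurable
      (Filter.Eventually.of_forall fun ω => by simpa using hb0 _)
  have main : (∫ x, h x ∂(Measure.map X ℙ)) - m
      = ∫ ω, (2 * (X ω + ν) - τ (X ω)) * φ' (X ω) := by
    rw [integral_map hXm.aemeasurable hhc.aestronglyMeasurable]
    have e1 : ∫ ω, (h (X ω) - m) = (∫ ω, h (X ω)) - m := by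
      rw [integral_sub i4 (integrable_const m)]; simp
    have e2 : ∫ ω, (h (X ω) - m) = ∫ ω, (2 * (X ω + ν) * φ' (X ω) - X ω * φ (X ω)) := by
      refine integral_congr_ae ?_
      filter_upwards [hsupp] with ω hω using hst _ hω
    rw [← e1, e2, integral_sub i3 i1, hker, ← integral_sub i3 i2]
    congr 1
    ext ω
    ring
  show |(∫ x, h x ∂(Measure.map X ℙ)) - m| ≤ _
  rw [main]
  refine abs_integral_le_integral_abs.trans ?_
  refine integral_mono_of_nonneg (Filter.Eventually.of_forall fun _ => abs_nonneg _)
    (i30.sub hτint).abs (Filter.Eventually.of_forall fun ω => ?_)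
  simp only [abs_mul]
  exact mul_le_of_le_one_right (abs_nonneg _) (hφb' _)
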